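/- (i) In every almost two-coloured perfect matching of the uncrossing gadget U, the vertices w, v, z_1, z_2 all receive the same colour, and the vertices a, b, z_3, z_4 all receive the same colour. (ii) Conversely, for every choice of a colour α for a, b, z_3, z_4 and a colour β for w, v, z_1, z_2 (α, β ∈ {black, white}, not necessarily distinct), there exists an almost two-coloured perfect matching of U in which a, b, z_3, z_4 all receive colour α and w, v, z_1, z_2 all receive colour β. -/

import Mathlib

/-- An almost two-coloured perfect matching of `G`: a two-colouring (black/white,
modelled by `Bool`) of the vertices in which every vertex of degree at least two
(i.e. having two distinct neighbours) has exactly one neighbour of the same colour. -/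
def IsAlmostTCPM {V : Type*} (G : SimpleGraph V) (c : V → Bool) : Prop :=
  ∀ v, (∃ w₁ w₂, w₁ ≠ w₂ ∧ G.Adj v w₁ ∧ G.Adj v w₂) →
    ∃! w, G.Adj v w ∧ c w = c v

/-- The vertices of the uncrossing gadget `U`. -/
inductive UV
| a | b | c | d | e | f | g | h | i | j | k | l | m | n | o | p | q | r
| s | t | u | v | w | x | z1 | z2 | z3 | z4
deriving DecidableEq

open UV in
/-- The edges of the uncrossing gadget `U`. -/
def UEdges : List (UV × UV) :=
  [(z3,z4),(u,z3),(x,z3),(u,x),(u,n),(x,q),(n,l),(n,m),(p,q),(q,r),(m,p),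
   (l,v),(v,w),(k,l),(k,m),(o,p),(o,r),(f,k),(i,o),(e,f),(d,f),(h,i),(i,j),
   (d,h),(c,e),(c,d),(g,h),(g,j),(e,v),(b,c),(a,b),(b,g),(s,t),(j,s),(r,t),
   (z1,z2),(s,z1),(t,z1)]

/-- The uncrossing gadget `U`. -/
def UG : SimpleGraph UV := SimpleGraph.fromRel (fun x₁ x₂ => (x₁, x₂) ∈ UEdges)

/-!
Call an edge leaving a 4-cycle of degree-three vertices a spoke of that 4-cycle. The spokes of a
4-cycle are either all monochromatic or all dichromatic, and in the second case opposite vertices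
of the 4-cycle have different colours. The gadget `U` contains a ring of four 4-cycles in which
consecutive ones share a spoke, so all their spokes are of the same kind. They are dichromatic,
because `b` lies on spokes of two of the 4-cycles but has only one neighbour of its own colour.
Hence the colour changes at each of the five steps of `b, c, f, k, n, u` (spokes alternating with
diagonals) and of `v, e, d, h, j, s`; five being odd, `b` and `u` differ, and so do `v` and `s`.
In each of the triangles `z₃ u x` and `z₁ s t` the edges leaving two of the vertices are
dichromatic spokes; the third vertex then differs from these two and shares its colour with its
pendant neighbour.
-/

section

variable {V : Type*} {G : SimpleGraph V} {c : V → Bool}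

open scoped Fin.CommRing in
lemma forall_of_forall_add_one {n : ℕ} [NeZero n] {P : Fin n → Prop}
    (hP : ∀ i, P i → P (i + 1)) {i : Fin n} (hi : P i) (j : Fin n) : P j := by
  have hadd (k : ℕ) : P (i + k) := by
    induction k with
    | zero => simpa using hi
    | succ k ih => simpa only [Nat.cast_succ, add_assoc] using hP _ ih
  simpa using hadd (j - i).val

/-- `v` is a vertex of degree three, with neighbours `x`, `y` and `z`. Lists make this decidable on
a finite graph. -/
abbrev IsCubicVertex (G : SimpleGraph V) (v x y z : V) : Prop :=
  [x, y, z].Nodup ∧ ∀ w, G.Adj v w ↔ w ∈ [x, y, z]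

/-- The vertices `p 0, p 1, p 2, p 3` form, in this cyclic order, a 4-cycle of vertices of degree
three, and `e i` is the third neighbour of `p i`; the edges from `p i` to `e i` are the *spokes* of
the 4-cycle. -/
abbrev IsCubicSquare (G : SimpleGraph V) (p e : Fin 4 → V) : Prop :=
  ∀ i, IsCubicVertex G (p i) (p (i + 1)) (p (i - 1)) (e i)

namespace IsAlmostTCPM

variable {v x y z : V}

lemma eq_of_adj (hc : IsAlmostTCPM G c) (hx : G.Adj v x) (hy : G.Adj v y)
    (hcx : c x = c v) (hcy : c y = c v) : x = y := by
  by_contra hxy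
  exact hxy ((hc v ⟨x, y, hxy, hx, hy⟩).unique ⟨hx, hcx⟩ ⟨hy, hcy⟩)

lemma ne_of_two_eq (hc : IsAlmostTCPM G c) (hv : IsCubicVertex G v x y z) (hxy : c x = c y) :
    c x ≠ c v := by
  obtain ⟨hnodup, hadj⟩ := hv
  intro hcx
  have : x = y := hc.eq_of_adj ((hadj x).2 (by simp)) ((hadj y).2 (by simp)) hcx (hxy ▸ hcx)
  simp [this] at hnodup

lemma third_eq_iff (hc : IsAlmostTCPM G c) (hv : IsCubicVertex G v x y z) :
    c z = c v ↔ c x = c y := by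
  have hne := hc.ne_of_two_eq hv
  obtain ⟨hnodup, hadj⟩ := hv
  simp only [List.nodup_cons, List.mem_cons, List.not_mem_nil, or_false, not_or] at hnodup hadj
  obtain ⟨⟨hxy, hxz⟩, hyz, -⟩ := hnodup
  have hx : G.Adj v x := (hadj x).2 (by simp)
  have hy : G.Adj v y := (hadj y).2 (by simp)
  have hz : G.Adj v z := (hadj z).2 (by simp)
  constructor
  · intro hcz
    have hcx : c x ≠ c v := fun h => hxz (hc.eq_of_adj hx hz h hcz)
    have hcy : c y ≠ c v := fun h => hyz (hc.eq_of_adj hy hz h hcz)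
    rw [Bool.eq_not.2 hcx, Bool.eq_not.2 hcy]
  · intro hcxy
    obtain ⟨w, ⟨hw, hcw⟩, -⟩ := hc v ⟨x, y, hxy, hx, hy⟩
    rcases (hadj w).1 hw with rfl | rfl | rfl
    · exact absurd hcw (hne hcxy)
    · exact absurd (hcxy.trans hcw) (hne hcxy)
    · exact hcw

lemma ne_of_third_ne (hc : IsAlmostTCPM G c) (hv : IsCubicVertex G v x y z)
    (hz : c z ≠ c v) : c x ≠ c y :=
  mt (hc.third_eq_iff hv).2 hz

lemma third_eq_of_ne_of_ne (hc : IsAlmostTCPM G c) (hv : IsCubicVertex G v x y z)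
    (hx : c x ≠ c v) (hy : c y ≠ c v) : c z = c v :=
  (hc.third_eq_iff hv).2 (by rw [Bool.eq_not.2 hx, Bool.eq_not.2 hy])

lemma of_neighborList {N : V → List V} (hN : ∀ v w, G.Adj v w ↔ w ∈ N v)
    (h : ∀ v, (N v).length ≤ 1 ∨ ((N v).filter (c · = c v)).length = 1) :
    IsAlmostTCPM G c := by
  rintro v ⟨w₁, w₂, hne, h₁, h₂⟩
  rcases h v with hle | hone
  · rw [hN] at h₁ h₂
    obtain hnil | ⟨w, hw⟩ : N v = [] ∨ ∃ w, N v = [w] := by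
      rwa [← List.length_eq_zero_iff, ← List.length_eq_one_iff, ← Nat.le_one_iff_eq_zero_or_eq_one]
    · simp [hnil] at h₁
    · rw [hw, List.mem_singleton] at h₁ h₂
      exact absurd (h₁.trans h₂.symm) hne
  · obtain ⟨w, hw⟩ := List.length_eq_one_iff.1 hone
    have hmem (y : V) : G.Adj v y ∧ c y = c v ↔ y = w := by
      rw [← List.mem_singleton (a := y), ← hw, List.mem_filter, hN, decide_eq_true_iff]
    exact ⟨w, (hmem w).2 rfl, fun y => (hmem y).1⟩

variable {p e q f : Fin 4 → V}

lemma spoke_eq_succ (hc : IsAlmostTCPM G c) (hp : IsCubicSquare G p e) {i : Fin 4}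
    (hi : c (e i) = c (p i)) : c (e (i + 1)) = c (p (i + 1)) := by
  have hsides : c (p (i + 1)) = c (p (i - 1)) := (hc.third_eq_iff (hp i)).1 hi
  have hp₀ : c (p (i + 1)) ≠ c (p i) := hc.ne_of_two_eq (hp i) hsides
  have hp₂ : c (p (i - 1)) ≠ c (p (i + 1 + 1)) := by
    refine hc.ne_of_two_eq (z := e (i + 1 + 1)) ?_ hsides.symm
    have := hp (i + 1 + 1)
    rwa [show i + 1 + 1 + 1 = i - 1 by grind, add_sub_cancel_right] at this
  rw [hc.third_eq_iff (hp (i + 1)), add_sub_cancel_right, Bool.eq_not.2 hp₀.symm,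
    Bool.eq_not.2 hp₂.symm, hsides]

lemma spoke_eq (hc : IsAlmostTCPM G c) (hp : IsCubicSquare G p e) {i : Fin 4}
    (hi : c (e i) = c (p i)) (j : Fin 4) : c (e j) = c (p j) :=
  forall_of_forall_add_one (P := fun k => c (e k) = c (p k))
    (fun _ hk => hc.spoke_eq_succ hp hk) hi j

lemma spoke_eq_opposite (hc : IsAlmostTCPM G c) (hp : IsCubicSquare G p e)
    (hne : ∀ i, c (e i) ≠ c (p i)) (i : Fin 4) : c (e (i + 2)) = c (p i) := by
  have hopp : c (p (i + 2)) ≠ c (p i) := by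
    have := hc.ne_of_third_ne (hp (i + 1)) (hne (i + 1))
    rwa [add_sub_cancel_right, add_assoc] at this
  rw [Bool.eq_not.2 (hne (i + 2)), Bool.eq_not.2 hopp.symm]

lemma linked_spokes_ne (hc : IsAlmostTCPM G c) (hp : IsCubicSquare G p e)
    (hq : IsCubicSquare G q f) (hp_ne : ∀ i, c (e i) ≠ c (p i))
    (hq_ne : ∀ i, c (f i) ≠ c (q i)) {i j : Fin 4} (hpq : e i = q j) :
    c (f (j + 2)) ≠ c (e (i + 2)) := by
  rw [hc.spoke_eq_opposite hq hq_ne, hc.spoke_eq_opposite hp hp_ne, ← hpq]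
  exact hp_ne i

end IsAlmostTCPM

end

instance : Fintype UV where
  elems := {.a, .b, .c, .d, .e, .f, .g, .h, .i, .j, .k, .l, .m, .n, .o, .p, .q, .r, .s, .t, .u,
    .v, .w, .x, .z1, .z2, .z3, .z4}
  complete y := by cases y <;> decide

namespace UG

/-- The neighbours of a vertex of `U`, computed from the edge list; this makes facts about `U`
decidable. -/
def neighborList (y : UV) : List UV :=
  (UEdges.filter (·.1 = y)).map Prod.snd ++ (UEdges.filter (·.2 = y)).map Prod.fst

lemma adj_iff_mem_neighborList (y z : UV) : UG.Adj y z ↔ z ∈ neighborList y := by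
  have hloopless : ∀ y, (y, y) ∉ UEdges := by decide
  have hne : (y, z) ∈ UEdges ∨ (z, y) ∈ UEdges → y ≠ z := by
    rintro h rfl
    exact hloopless y (or_self_iff.1 h)
  simpa [UG, neighborList] using hne

instance : DecidableRel UG.Adj :=
  fun y z => decidable_of_iff' _ (adj_iff_mem_neighborList y z)

open UV in
/-- The four 4-cycles of `U`, in cyclic order. They are numbered so that the edge from
`square s 1` to `square (s + 1) 0` links each one to the next. -/
def square : Fin 4 → Fin 4 → UV :=
  ![![f, d, c, e], ![h, i, j, g], ![o, p, q, r], ![m, k, l, n]]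

open UV in
/-- The third neighbours of the vertices of `UG.square`. -/
def spoke : Fin 4 → Fin 4 → UV :=
  ![![k, h, b, v], ![d, o, s, b], ![i, m, x, t], ![p, f, v, u]]

lemma isCubicSquare (s : Fin 4) : IsCubicSquare UG (square s) (spoke s) := by
  revert s; decide

lemma spoke_one (s : Fin 4) : spoke s 1 = square (s + 1) 0 := by
  revert s; decide

lemma spoke_succ_zero (s : Fin 4) : spoke (s + 1) 0 = square s 1 := by
  revert s; decide

lemma isCubicVertex_b : IsCubicVertex UG .b .c .g .a := by decide

lemma isCubicVertex_v : IsCubicVertex UG .v .e .l .w := by decide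

lemma isCubicVertex_s : IsCubicVertex UG .s .t .z1 .j := by decide

lemma isCubicVertex_t : IsCubicVertex UG .t .s .z1 .r := by decide

lemma isCubicVertex_u : IsCubicVertex UG .u .x .z3 .n := by decide

lemma isCubicVertex_x : IsCubicVertex UG .x .u .z3 .q := by decide

lemma isCubicVertex_z1 : IsCubicVertex UG .z1 .s .t .z2 := by decide

lemma isCubicVertex_z3 : IsCubicVertex UG .z3 .u .x .z4 := by decide

variable {c : UV → Bool}

lemma spokes_eq_succ (hc : IsAlmostTCPM UG c) (s : Fin 4)
    (hs : ∀ i, c (spoke s i) = c (square s i)) (i : Fin 4) :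
    c (spoke (s + 1) i) = c (square (s + 1) i) :=
  hc.spoke_eq (isCubicSquare (s + 1)) (i := 0)
    (by rw [spoke_succ_zero, ← spoke_one, hs 1]) i

lemma spoke_ne (hc : IsAlmostTCPM UG c) (s i : Fin 4) : c (spoke s i) ≠ c (square s i) := by
  intro h
  have hmono : ∀ s i, c (spoke s i) = c (square s i) :=
    forall_of_forall_add_one (spokes_eq_succ hc) (hc.spoke_eq (isCubicSquare s) h)
  have hbc : c .b = c .c := hmono 0 2
  have hbg : c .b = c .g := hmono 1 3
  exact hc.ne_of_two_eq isCubicVertex_b (hbc.symm.trans hbg) hbc.symm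

lemma spoke_succ_two_ne_spoke_three (hc : IsAlmostTCPM UG c) (s : Fin 4) :
    c (spoke (s + 1) 2) ≠ c (spoke s 3) :=
  hc.linked_spokes_ne (isCubicSquare s) (isCubicSquare (s + 1)) (spoke_ne hc s)
    (spoke_ne hc (s + 1)) (spoke_one s)

lemma a_eq_b (hc : IsAlmostTCPM UG c) : c .a = c .b :=
  hc.third_eq_of_ne_of_ne isCubicVertex_b (spoke_ne hc 0 2).symm (spoke_ne hc 1 3).symm

lemma w_eq_v (hc : IsAlmostTCPM UG c) : c .w = c .v :=
  hc.third_eq_of_ne_of_ne isCubicVertex_v (spoke_ne hc 0 3).symm (spoke_ne hc 3 2).symm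

lemma s_ne_z1 (hc : IsAlmostTCPM UG c) : c .s ≠ c .z1 :=
  hc.ne_of_third_ne isCubicVertex_t (spoke_ne hc 2 3).symm

lemma t_ne_z1 (hc : IsAlmostTCPM UG c) : c .t ≠ c .z1 :=
  hc.ne_of_third_ne isCubicVertex_s (spoke_ne hc 1 2).symm

lemma z2_eq_z1 (hc : IsAlmostTCPM UG c) : c .z2 = c .z1 :=
  hc.third_eq_of_ne_of_ne isCubicVertex_z1 (s_ne_z1 hc) (t_ne_z1 hc)

lemma u_ne_z3 (hc : IsAlmostTCPM UG c) : c .u ≠ c .z3 :=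
  hc.ne_of_third_ne isCubicVertex_x (spoke_ne hc 2 2).symm

lemma x_ne_z3 (hc : IsAlmostTCPM UG c) : c .x ≠ c .z3 :=
  hc.ne_of_third_ne isCubicVertex_u (spoke_ne hc 3 3).symm

lemma z4_eq_z3 (hc : IsAlmostTCPM UG c) : c .z4 = c .z3 :=
  hc.third_eq_of_ne_of_ne isCubicVertex_z3 (u_ne_z3 hc) (x_ne_z3 hc)

lemma b_eq_z3 (hc : IsAlmostTCPM UG c) : c .b = c .z3 := by
  have hbu : c .b ≠ c .u := spoke_succ_two_ne_spoke_three hc 3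
  rw [Bool.eq_not.2 hbu, Bool.eq_not.2 (u_ne_z3 hc).symm]

lemma v_eq_z1 (hc : IsAlmostTCPM UG c) : c .v = c .z1 := by
  have hsv : c .s ≠ c .v := spoke_succ_two_ne_spoke_three hc 0
  rw [Bool.eq_not.2 hsv.symm, Bool.eq_not.2 (s_ne_z1 hc).symm]

/-- The almost two-coloured perfect matching of `U` with colour `α` on `a, b, z₃, z₄` and `β` on
`w, v, z₁, z₂`. All other colours are forced, every spoke being dichromatic. -/
def colouring (α β : Bool) : UV → Bool
  | .a | .b | .f | .i | .n | .q | .z3 | .z4 => α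
  | .c | .g | .k | .o | .u | .x => !α
  | .d | .j | .m | .r | .v | .w | .z1 | .z2 => β
  | .e | .h | .l | .p | .s | .t => !β

lemma isAlmostTCPM_colouring (α β : Bool) : IsAlmostTCPM UG (colouring α β) := by
  refine .of_neighborList adj_iff_mem_neighborList ?_
  revert α β
  decide

end UG

/-- (i) In every almost two-coloured perfect matching of `U` the vertices
`w, v, z₁, z₂` receive the same colour and the vertices `a, b, z₃, z₄` receive
the same colour.  (ii) Conversely, for all colours `α` (for `a, b, z₃, z₄`) and `β`
(for `w, v, z₁, z₂`) there is an almost two-coloured perfect matching of `U`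
realising them. -/
theorem stmt_6 :
    (∀ c : UV → Bool, IsAlmostTCPM UG c →
      (c UV.w = c UV.v ∧ c UV.v = c UV.z1 ∧ c UV.z1 = c UV.z2) ∧
      (c UV.a = c UV.b ∧ c UV.b = c UV.z3 ∧ c UV.z3 = c UV.z4)) ∧
    (∀ α β : Bool, ∃ c : UV → Bool, IsAlmostTCPM UG c ∧
      c UV.a = α ∧ c UV.b = α ∧ c UV.z3 = α ∧ c UV.z4 = α ∧
      c UV.w = β ∧ c UV.v = β ∧ c UV.z1 = β ∧ c UV.z2 = β) := by
  refine ⟨fun c hc => ⟨?_, ?_⟩, fun α β => ?_⟩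
  · exact ⟨UG.w_eq_v hc, UG.v_eq_z1 hc, (UG.z2_eq_z1 hc).symm⟩
  · exact ⟨UG.a_eq_b hc, UG.b_eq_z3 hc, (UG.z4_eq_z3 hc).symm⟩
  · exact ⟨UG.colouring α β, UG.isAlmostTCPM_colouring α β,
      rfl, rfl, rfl, rfl, rfl, rfl, rfl, rfl⟩
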